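/- arXiv:math/9805104 — 2 statements merged into one kernel-verified Lean document; each statement's English description precedes it below -/
import Mathlib

section
/- Let A be a right-monoidal weak bialgebra (ε(abc) = ε(a b₍₂₎) ε(b₍₁₎ c) for all a, b, c) and S an anti-multiplicative pre-antipode on A. Then S is an antipode and the images ε_LR(A) and ε_RL(A) commute element-wise. -/
open TensorProduct

noncomputable section

variable (K A : Type*) [Field K] [Ring A] [Algebra K A] [Coalgebra K A]

/-- The linear map `a ↦ a ⊗ 1`. -/
def inclL : A →ₗ[K] A ⊗[K] A := (TensorProduct.mk K A A).flip 1

/-- The linear map `a ↦ 1 ⊗ a`. -/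
def inclR : A →ₗ[K] A ⊗[K] A := TensorProduct.mk K A A 1

/-- `ε_LL(a) = ε(a 1₍₁₎) 1₍₂₎`. -/
def eLL : A →ₗ[K] A :=
  (TensorProduct.lid K A).toLinearMap ∘ₗ
    LinearMap.rTensor A (Coalgebra.counit (R := K) (A := A)) ∘ₗ
    LinearMap.mulRight K (Coalgebra.comul (R := K) (1 : A)) ∘ₗ inclL K A

/-- `ε_RR(a) = 1₍₁₎ ε(1₍₂₎ a)`. -/
def eRR : A →ₗ[K] A :=
  (TensorProduct.rid K A).toLinearMap ∘ₗ
    LinearMap.lTensor A (Coalgebra.counit (R := K) (A := A)) ∘ₗ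
    LinearMap.mulLeft K (Coalgebra.comul (R := K) (1 : A)) ∘ₗ inclR K A

/-- `ε_LR(a) = ε(1₍₁₎ a) 1₍₂₎`. -/
def eLR : A →ₗ[K] A :=
  (TensorProduct.lid K A).toLinearMap ∘ₗ
    LinearMap.rTensor A (Coalgebra.counit (R := K) (A := A)) ∘ₗ
    LinearMap.mulLeft K (Coalgebra.comul (R := K) (1 : A)) ∘ₗ inclL K A

/-- `ε_RL(a) = 1₍₁₎ ε(a 1₍₂₎)`. -/
def eRL : A →ₗ[K] A :=
  (TensorProduct.rid K A).toLinearMap ∘ₗ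
    LinearMap.lTensor A (Coalgebra.counit (R := K) (A := A)) ∘ₗ
    LinearMap.mulRight K (Coalgebra.comul (R := K) (1 : A)) ∘ₗ inclR K A

/-- Convolution product: `(conv f g)(a) = f(a₍₁₎) g(a₍₂₎)` (implicit Sweedler sums). -/
def conv (f g : A →ₗ[K] A) : A →ₗ[K] A :=
  LinearMap.mul' K A ∘ₗ TensorProduct.map f g ∘ₗ Coalgebra.comul (R := K)

/-- Opposite convolution: `(copConv f g)(a) = f(a₍₂₎) g(a₍₁₎)`. -/
def copConv (f g : A →ₗ[K] A) : A →ₗ[K] A :=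
  LinearMap.mul' K A ∘ₗ TensorProduct.map f g ∘ₗ
    (TensorProduct.comm K A A).toLinearMap ∘ₗ Coalgebra.comul (R := K)

/-- `ε ⊗ ε` as a functional on `A ⊗ A`. -/
def pairCC : A ⊗[K] A →ₗ[K] K :=
  (TensorProduct.lid K K).toLinearMap ∘ₗ
    TensorProduct.map (Coalgebra.counit (R := K) (A := A)) (Coalgebra.counit (R := K) (A := A))

/-- `a ↦ ε(a)·1`. -/
def epsUnit : A →ₗ[K] A := Algebra.linearMap K A ∘ₗ Coalgebra.counit (R := K)

/-- `b ↦ (x ↦ ε(b x))`, i.e. the map `ε_L : A → Â`. -/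
def epsLfun : A →ₗ[K] A →ₗ[K] K :=
  LinearMap.llcomp K A A K (Coalgebra.counit (R := K) (A := A)) ∘ₗ LinearMap.mul K A

/-- The weak-bialgebra axiom: the coproduct is multiplicative. -/
def WeakBialg : Prop :=
  ∀ a b : A, Coalgebra.comul (R := K) (a * b) =
    Coalgebra.comul (R := K) a * Coalgebra.comul (R := K) b

/-- `ε(abc) = ε(a b₍₁₎) ε(b₍₂₎ c)` for all `a b c`. -/
def LeftMonoidal : Prop :=
  ∀ a b c : A, Coalgebra.counit (R := K) (a * b * c) =
    pairCC K A ((a ⊗ₜ[K] (1 : A)) * Coalgebra.comul (R := K) b * ((1 : A) ⊗ₜ[K] c))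

/-- `ε(abc) = ε(a b₍₂₎) ε(b₍₁₎ c)` for all `a b c`. -/
def RightMonoidal : Prop :=
  ∀ a b c : A, Coalgebra.counit (R := K) (a * b * c) =
    pairCC K A ((a ⊗ₜ[K] (1 : A)) *
      (TensorProduct.comm K A A (Coalgebra.comul (R := K) b)) * ((1 : A) ⊗ₜ[K] c))

/-- `(Δ(1) ⊗ 1)(1 ⊗ Δ(1)) = (Δ ⊗ id)(Δ(1))`. -/
def LeftComonoidal : Prop :=
  ((Coalgebra.comul (R := K) (1 : A)) ⊗ₜ[K] (1 : A)) *
      ((TensorProduct.assoc K A A A).symm ((1 : A) ⊗ₜ[K] Coalgebra.comul (R := K) (1 : A))) =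
    LinearMap.rTensor A (Coalgebra.comul (R := K)) (Coalgebra.comul (R := K) (1 : A))

/-- `(1 ⊗ Δ(1))(Δ(1) ⊗ 1) = (Δ ⊗ id)(Δ(1))`. -/
def RightComonoidal : Prop :=
  ((TensorProduct.assoc K A A A).symm ((1 : A) ⊗ₜ[K] Coalgebra.comul (R := K) (1 : A))) *
      ((Coalgebra.comul (R := K) (1 : A)) ⊗ₜ[K] (1 : A)) =
    LinearMap.rTensor A (Coalgebra.comul (R := K)) (Coalgebra.comul (R := K) (1 : A))

/-- `N_LL(A) = {a | Δ(a) = a 1₍₁₎ ⊗ 1₍₂₎}`. -/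
def NLL : Set A :=
  {a : A | Coalgebra.comul (R := K) a =
    (a ⊗ₜ[K] (1 : A)) * Coalgebra.comul (R := K) (1 : A)}

/-- `N_LR(A) = {a | Δ(a) = 1₍₁₎ a ⊗ 1₍₂₎}`. -/
def NLR : Set A :=
  {a : A | Coalgebra.comul (R := K) a =
    Coalgebra.comul (R := K) (1 : A) * (a ⊗ₜ[K] (1 : A))}

/-- `N_RL(A) = {a | Δ(a) = 1₍₁₎ ⊗ a 1₍₂₎}`. -/
def NRL : Set A :=
  {a : A | Coalgebra.comul (R := K) a =
    ((1 : A) ⊗ₜ[K] a) * Coalgebra.comul (R := K) (1 : A)}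

/-- `N_RR(A) = {a | Δ(a) = 1₍₁₎ ⊗ 1₍₂₎ a}`. -/
def NRR : Set A :=
  {a : A | Coalgebra.comul (R := K) a =
    Coalgebra.comul (R := K) (1 : A) * ((1 : A) ⊗ₜ[K] a)}

/-- A subset which is a unital subalgebra. -/
def IsUnitalSub (S : Set A) : Prop :=
  (1 : A) ∈ S ∧ (∀ x ∈ S, ∀ y ∈ S, x * y ∈ S) ∧ (∀ x ∈ S, ∀ y ∈ S, x + y ∈ S) ∧
    ∀ (k : K), ∀ x ∈ S, k • x ∈ S

/-- `A_L = {φ(1₍₁₎) 1₍₂₎ : φ ∈ Â}`. -/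
def ALset : Set A :=
  {x : A | ∃ φ : A →ₗ[K] K,
    x = (TensorProduct.lid K A) (LinearMap.rTensor A φ (Coalgebra.comul (R := K) (1 : A)))}

/-- `A_R = {φ(1₍₂₎) 1₍₁₎ : φ ∈ Â}`. -/
def ARset : Set A :=
  {x : A | ∃ φ : A →ₗ[K] K,
    x = (TensorProduct.rid K A) (LinearMap.lTensor A φ (Coalgebra.comul (R := K) (1 : A)))}

variable {K A}

lemma conv_rep (f g : A →ₗ[K] A) (a : A) {ι : Type*} (s : Finset ι) (x y : ι → A)
    (h : Coalgebra.comul (R := K) a = ∑ i ∈ s, x i ⊗ₜ[K] y i) :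
    conv K A f g a = ∑ i ∈ s, f (x i) * g (y i) := by
  simp [conv, h, map_sum]

lemma eLR_rep (a : A) {ι : Type*} (s : Finset ι) (x y : ι → A)
    (h : Coalgebra.comul (R := K) (1 : A) = ∑ i ∈ s, x i ⊗ₜ[K] y i) :
    eLR K A a = ∑ i ∈ s, Coalgebra.counit (R := K) (x i * a) • y i := by
  simp [eLR, inclL, h, map_sum, Finset.sum_mul]

lemma eRL_rep (a : A) {ι : Type*} (s : Finset ι) (x y : ι → A)
    (h : Coalgebra.comul (R := K) (1 : A) = ∑ i ∈ s, x i ⊗ₜ[K] y i) :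
    eRL K A a = ∑ i ∈ s, Coalgebra.counit (R := K) (a * y i) • x i := by
  simp [eRL, inclR, h, map_sum, Finset.mul_sum]

lemma exists_rep (z : A ⊗[K] A) : ∃ (s : Finset (A × A)) (x y : A × A → A),
    z = ∑ i ∈ s, x i ⊗ₜ[K] y i := by
  obtain ⟨s, hs⟩ := TensorProduct.exists_finset (R := K) z
  exact ⟨s, Prod.fst, Prod.snd, hs⟩

lemma conv_assoc' (f g h : A →ₗ[K] A) :
    conv K A (conv K A f g) h = conv K A f (conv K A g h) := by
  have := mul_assoc (WithConv.toConv f) (WithConv.toConv g) (WithConv.toConv h)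
  exact congrArg WithConv.ofConv this

/-- `(ε(·b) ⊗ id)`. -/
def cL (b : A) : A ⊗[K] A →ₗ[K] A := (TensorProduct.lid K A).toLinearMap ∘ₗ
    LinearMap.rTensor A (Coalgebra.counit (R := K) (A := A) ∘ₗ LinearMap.mulRight K b)

/-- `(id ⊗ ε(b·))`. -/
def cR (b : A) : A ⊗[K] A →ₗ[K] A := (TensorProduct.rid K A).toLinearMap ∘ₗ
    LinearMap.lTensor A (Coalgebra.counit (R := K) (A := A) ∘ₗ LinearMap.mulLeft K b)

lemma cL_tmul (b x y : A) : cL (K := K) b (x ⊗ₜ y) = Coalgebra.counit (R := K) (x * b) • y := by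
  simp [cL]

lemma cR_tmul (b x y : A) : cR (K := K) b (x ⊗ₜ y) = Coalgebra.counit (R := K) (b * y) • x := by
  simp [cR]

lemma cL_one (a : A) : cL (K := K) 1 (Coalgebra.comul (R := K) a) = a := by
  have h : LinearMap.mulRight K (1 : A) = LinearMap.id := by ext; simp
  simp [cL, h]

lemma cR_one (a : A) : cR (K := K) 1 (Coalgebra.comul (R := K) a) = a := by
  have h : LinearMap.mulLeft K (1 : A) = LinearMap.id := by ext; simp
  simp [cR, h]

/-- `u ⊗ (v ⊗ w) ↦ ε(u b) (ε ⊗ id)(z (v ⊗ w))`. -/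
def fL (b : A) (z : A ⊗[K] A) : A ⊗[K] (A ⊗[K] A) →ₗ[K] A :=
  (TensorProduct.lid K A).toLinearMap ∘ₗ
    TensorProduct.map (Coalgebra.counit (R := K) (A := A) ∘ₗ LinearMap.mulRight K b)
      (cL (K := K) 1 ∘ₗ LinearMap.mulLeft K z)

/-- `(u ⊗ v) ⊗ w ↦ ε(b w) (id ⊗ ε)((u ⊗ v) z)`. -/
def fR (b : A) (z : A ⊗[K] A) : (A ⊗[K] A) ⊗[K] A →ₗ[K] A :=
  (TensorProduct.rid K A).toLinearMap ∘ₗ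
    TensorProduct.map (cR (K := K) 1 ∘ₗ LinearMap.mulRight K z)
      (Coalgebra.counit (R := K) (A := A) ∘ₗ LinearMap.mulLeft K b)

lemma fL_key (hmono : RightMonoidal K A) (b u v : A) (z : A ⊗[K] A) :
    cL (K := K) b (z * (u ⊗ₜ v)) = fL b z
      (TensorProduct.assoc K A A A (Coalgebra.comul (R := K) u ⊗ₜ v)) := by
  obtain ⟨s, x, y, h⟩ := exists_rep (K := K) (Coalgebra.comul (R := K) u)
  induction z with
  | zero => simp [fL]
  | add p q hp hq =>
    rw [add_mul, map_add, hp, hq]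
    simp [fL, h, TensorProduct.sum_tmul, add_mul, Finset.sum_add_distrib]
  | tmul p q =>
    have := hmono p u b
    simp only [h, map_sum, Finset.mul_sum, Finset.sum_mul] at this
    simp [cL_tmul, this, fL, h, TensorProduct.sum_tmul, Finset.sum_smul, pairCC,
      smul_smul, mul_comm]

lemma fR_key (hmono : RightMonoidal K A) (b u v : A) (z : A ⊗[K] A) :
    cR (K := K) b ((u ⊗ₜ v) * z) = fR b z
      ((TensorProduct.assoc K A A A).symm (u ⊗ₜ Coalgebra.comul (R := K) v)) := by
  obtain ⟨s, x, y, h⟩ := exists_rep (K := K) (Coalgebra.comul (R := K) v)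
  induction z with
  | zero => simp [fR]
  | add p q hp hq =>
    rw [mul_add, map_add, hp, hq]
    simp [fR, h, TensorProduct.tmul_sum, mul_add, Finset.sum_add_distrib]
  | tmul p q =>
    have := hmono b v q
    simp only [h, map_sum, Finset.mul_sum, Finset.sum_mul] at this
    simp [cR_tmul, ← mul_assoc, this, fR, h, TensorProduct.tmul_sum, Finset.sum_smul, pairCC,
      smul_smul, mul_comm]

lemma mul_eLR (hΔ : WeakBialg K A) (hmono : RightMonoidal K A) (a b : A) :
    a * eLR K A b = cL (K := K) b (Coalgebra.comul (R := K) a) := by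
  obtain ⟨s, x, y, h⟩ := exists_rep (K := K) (Coalgebra.comul (R := K) (1 : A))
  have e1 : Coalgebra.comul (R := K) a =
      Coalgebra.comul (R := K) a * Coalgebra.comul (R := K) 1 := by rw [← hΔ, mul_one]
  have e2 := Coalgebra.coassoc_apply (R := K) (1 : A)
  rw [h] at e2
  simp only [map_sum, LinearMap.rTensor_tmul, LinearMap.lTensor_tmul] at e2
  rw [e1, h, Finset.mul_sum, map_sum, Finset.sum_congr rfl (fun i _ => fL_key hmono b _ _ _),
    ← map_sum, e2, map_sum, eLR_rep b s x y h, Finset.mul_sum]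
  refine Finset.sum_congr rfl fun i _ => ?_
  simp [fL, ← hΔ a, cL_one]

lemma eRL_mul (hΔ : WeakBialg K A) (hmono : RightMonoidal K A) (a b : A) :
    eRL K A b * a = cR (K := K) b (Coalgebra.comul (R := K) a) := by
  obtain ⟨s, x, y, h⟩ := exists_rep (K := K) (Coalgebra.comul (R := K) (1 : A))
  have e1 : Coalgebra.comul (R := K) a =
      Coalgebra.comul (R := K) 1 * Coalgebra.comul (R := K) a := by rw [← hΔ, one_mul]
  have e2 := Coalgebra.coassoc_symm_apply (R := K) (1 : A)
  rw [h] at e2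
  simp only [map_sum, LinearMap.rTensor_tmul, LinearMap.lTensor_tmul] at e2
  rw [e1, h, Finset.sum_mul, map_sum, Finset.sum_congr rfl (fun i _ => fR_key hmono b _ _ _),
    ← map_sum, e2, map_sum, eRL_rep b s x y h, Finset.sum_mul]
  refine Finset.sum_congr rfl fun i _ => ?_
  simp [fR, ← hΔ _ a, cR_one]

/-- `ε_LR(b₁ a) b₂ = b ε_LR(a)`. -/
lemma conv_eLR (hΔ : WeakBialg K A) (hmono : RightMonoidal K A) (a : A) :
    conv K A (eLR K A ∘ₗ LinearMap.mulRight K a) LinearMap.id =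
      LinearMap.mulRight K (eLR K A a) := by
  ext b
  obtain ⟨s, x, y, h⟩ := exists_rep (K := K) (Coalgebra.comul (R := K) (1 : A))
  obtain ⟨t, p, q, h'⟩ := exists_rep (K := K) (Coalgebra.comul (R := K) b)
  have e1 : Coalgebra.comul (R := K) b =
      Coalgebra.comul (R := K) 1 * Coalgebra.comul (R := K) b := by rw [← hΔ, one_mul]
  rw [conv_rep _ _ b t p q h', LinearMap.mulRight_apply, mul_eLR hΔ hmono, e1, h, h']
  simp only [Finset.mul_sum, Finset.sum_mul, map_sum, Algebra.TensorProduct.tmul_mul_tmul, cL_tmul,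
    LinearMap.comp_apply, LinearMap.mulRight_apply, eLR_rep _ s x y h, LinearMap.id_apply,
    smul_mul_assoc, mul_assoc]

/-- `a₁ ε_RL(b a₂) = ε_RL(b) a`. -/
lemma conv_eRL (hΔ : WeakBialg K A) (hmono : RightMonoidal K A) (b : A) :
    conv K A LinearMap.id (eRL K A ∘ₗ LinearMap.mulLeft K b) =
      LinearMap.mulLeft K (eRL K A b) := by
  ext a
  obtain ⟨s, x, y, h⟩ := exists_rep (K := K) (Coalgebra.comul (R := K) (1 : A))
  obtain ⟨t, p, q, h'⟩ := exists_rep (K := K) (Coalgebra.comul (R := K) a)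
  have e1 : Coalgebra.comul (R := K) a =
      Coalgebra.comul (R := K) a * Coalgebra.comul (R := K) 1 := by rw [← hΔ, mul_one]
  rw [conv_rep _ _ a t p q h', LinearMap.mulLeft_apply, eRL_mul hΔ hmono, e1, h, h']
  simp only [Finset.mul_sum, Finset.sum_mul, map_sum, Algebra.TensorProduct.tmul_mul_tmul, cR_tmul,
    LinearMap.comp_apply, LinearMap.mulLeft_apply, eRL_rep _ s x y h, LinearMap.id_apply,
    mul_smul_comm, mul_assoc]
  rw [Finset.sum_comm]

lemma eLR_one : eLR K A 1 = 1 := by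
  obtain ⟨s, x, y, h⟩ := exists_rep (K := K) (Coalgebra.comul (R := K) (1 : A))
  have := cL_one (K := K) (1 : A)
  rw [h] at this
  simpa [eLR_rep _ s x y h, cL_tmul] using this

lemma conv_eLR_id (hΔ : WeakBialg K A) (hmono : RightMonoidal K A) :
    conv K A (eLR K A) LinearMap.id = LinearMap.id := by
  have := conv_eLR hΔ hmono (1 : A)
  have h : LinearMap.mulRight K (1 : A) = LinearMap.id := by ext; simp
  simpa [eLR_one, h] using this

lemma conv_S_eLR (hΔ : WeakBialg K A) (hmono : RightMonoidal K A) (S : A →ₗ[K] A)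
    (hanti : ∀ a b : A, S (a * b) = S b * S a) :
    ∃ c : A, ∀ a, conv K A S (eLR K A) a = S a * c := by
  obtain ⟨s, x, y, h⟩ := exists_rep (K := K) (Coalgebra.comul (R := K) (1 : A))
  refine ⟨∑ i ∈ s, S (eRL K A (x i)) * y i, fun a => ?_⟩
  obtain ⟨t, p, q, h'⟩ := exists_rep (K := K) (Coalgebra.comul (R := K) a)
  rw [conv_rep _ _ a t p q h']
  simp only [Finset.mul_sum, ← mul_assoc, ← hanti, eRL_mul hΔ hmono, h', map_sum, cR_tmul,
    eLR_rep _ s x y h, mul_smul_comm, map_smul, Finset.sum_mul, smul_mul_assoc]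
  rw [Finset.sum_comm]

lemma antipode_of (hΔ : WeakBialg K A) (hmono : RightMonoidal K A) (S : A →ₗ[K] A)
    (hpre1 : conv K A LinearMap.id S = eLR K A)
    (hanti : ∀ a b : A, S (a * b) = S b * S a) :
    conv K A (conv K A S LinearMap.id) S = S := by
  obtain ⟨c, hc⟩ := conv_S_eLR hΔ hmono S hanti
  have h1 : conv K A LinearMap.id (conv K A S (eLR K A)) = eLR K A := by
    rw [← conv_assoc', hpre1]
    nth_rewrite 2 [← hpre1]
    rw [← conv_assoc', conv_eLR_id hΔ hmono, hpre1]
  have h2 : conv K A S (eLR K A) = LinearMap.mulRight K c ∘ₗ S := by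
    ext a; simp [hc]
  obtain ⟨s, x, y, h⟩ := exists_rep (K := K) (Coalgebra.comul (R := K) (1 : A))
  have h3 : eLR K A 1 = eLR K A 1 * c := by
    conv_lhs => rw [← h1, h2]
    rw [← hpre1, conv_rep _ _ 1 s x y h, conv_rep _ _ 1 s x y h]
    simp [Finset.sum_mul, mul_assoc]
  rw [eLR_one, one_mul] at h3
  rw [conv_assoc', hpre1, h2, ← h3]
  ext; simp

lemma conv_sum_right {ι : Type*} (s : Finset ι) (f : A →ₗ[K] A) (g : ι → A →ₗ[K] A) :
    conv K A f (∑ i ∈ s, g i) = ∑ i ∈ s, conv K A f (g i) := by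
  ext a
  obtain ⟨t, p, q, h⟩ := exists_rep (K := K) (Coalgebra.comul (R := K) a)
  simp only [LinearMap.sum_apply, conv_rep _ _ a t p q h, Finset.mul_sum]
  rw [Finset.sum_comm]

/-- `ε_LR(a) S(b) = ε_RL(b₁) ε_LR(a) S(b₂)`. -/
lemma key_comm (hΔ : WeakBialg K A) (hmono : RightMonoidal K A) (S : A →ₗ[K] A)
    (hpre1 : conv K A LinearMap.id S = eLR K A)
    (hpre2 : conv K A S LinearMap.id = eRL K A)
    (hanti : ∀ a b : A, S (a * b) = S b * S a) (a : A) :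
    LinearMap.mulLeft K (eLR K A a) ∘ₗ S =
      conv K A (eRL K A) (LinearMap.mulLeft K (eLR K A a) ∘ₗ S) := by
  have hS := antipode_of hΔ hmono S hpre1 hanti
  rw [hpre2] at hS
  ext b
  obtain ⟨t, p, q, hb⟩ := exists_rep (K := K) (Coalgebra.comul (R := K) b)
  obtain ⟨s, x, y, ha⟩ := exists_rep (K := K) (Coalgebra.comul (R := K) a)
  have h1 : S ∘ₗ LinearMap.mulLeft K b = ∑ j ∈ t,
      conv K A (eRL K A ∘ₗ LinearMap.mulLeft K (p j)) (S ∘ₗ LinearMap.mulLeft K (q j)) := by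
    ext d
    obtain ⟨r, u, v, hd⟩ := exists_rep (K := K) (Coalgebra.comul (R := K) d)
    have hbd := hΔ b d
    rw [hb, hd, Finset.sum_mul_sum, ← Finset.sum_product'] at hbd
    simp only [Algebra.TensorProduct.tmul_mul_tmul] at hbd
    rw [LinearMap.comp_apply, LinearMap.mulLeft_apply]
    conv_lhs => rw [← hS]
    rw [conv_rep _ _ (b * d) _ _ _ hbd, Finset.sum_product]
    simp [conv_rep _ _ d r u v hd]
  have h2 : conv K A LinearMap.id (S ∘ₗ LinearMap.mulLeft K b) a = eLR K A a * S b := by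
    rw [← hpre1, conv_rep _ _ a s x y ha, conv_rep _ _ a s x y ha]
    simp [hanti, Finset.sum_mul, mul_assoc]
  rw [LinearMap.comp_apply, LinearMap.mulLeft_apply, ← h2, h1, conv_sum_right,
    LinearMap.sum_apply, conv_rep _ _ b t p q hb]
  refine Finset.sum_congr rfl fun j _ => ?_
  rw [← conv_assoc', conv_eRL hΔ hmono, ← hpre1, conv_rep _ _ a s x y ha, LinearMap.comp_apply,
    LinearMap.mulLeft_apply, conv_rep _ _ a s x y ha]
  simp [hanti, Finset.sum_mul, Finset.mul_sum, mul_assoc]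

lemma eLR_eRL_comm (hΔ : WeakBialg K A) (hmono : RightMonoidal K A) (S : A →ₗ[K] A)
    (hpre1 : conv K A LinearMap.id S = eLR K A)
    (hpre2 : conv K A S LinearMap.id = eRL K A)
    (hanti : ∀ a b : A, S (a * b) = S b * S a) (a b : A) :
    eLR K A a * eRL K A b = eRL K A b * eLR K A a := by
  obtain ⟨t, p, q, hb⟩ := exists_rep (K := K) (Coalgebra.comul (R := K) b)
  have h0 : ∀ c : A, conv K A LinearMap.id (LinearMap.mulLeft K c ∘ₗ S) =
      conv K A (LinearMap.mulRight K c) S := by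
    intro c
    ext d
    obtain ⟨r, u, v, hd⟩ := exists_rep (K := K) (Coalgebra.comul (R := K) d)
    simp [conv_rep _ _ d r u v hd, mul_assoc]
  have h1 : conv K A (conv K A (LinearMap.mulRight K (eLR K A a)) S) LinearMap.id =
      LinearMap.mulRight K (eLR K A a) := by
    rw [← conv_eLR hΔ hmono, conv_assoc', conv_assoc', ← conv_assoc' _ S, hpre1,
      conv_eLR_id hΔ hmono]
  have h2 : conv K A (LinearMap.mulLeft K (eLR K A a) ∘ₗ S) LinearMap.id =
      conv K A S (LinearMap.mulRight K (eLR K A a)) := by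
    rw [key_comm hΔ hmono S hpre1 hpre2 hanti, ← hpre2, conv_assoc' S, h0, conv_assoc' S, h1]
  have h3 := LinearMap.congr_fun h2 b
  rw [conv_rep _ _ b t p q hb, conv_rep _ _ b t p q hb] at h3
  rw [← hpre2, conv_rep _ _ b t p q hb]
  simpa [Finset.sum_mul, Finset.mul_sum, mul_assoc] using h3

variable (K A)

/-- on a right-monoidal weak bialgebra an anti-multiplicative
pre-antipode is an antipode, and `ε_LR(A)` commutes with `ε_RL(A)`. -/
theorem stmt17 [FiniteDimensional K A] (hΔ : WeakBialg K A)
    (hmono : RightMonoidal K A) (S : A →ₗ[K] A)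
    (hpre1 : conv K A LinearMap.id S = eLR K A)
    (hpre2 : conv K A S LinearMap.id = eRL K A)
    (hanti : ∀ a b : A, S (a * b) = S b * S a) :
    (∀ a : A, conv K A (conv K A S LinearMap.id) S a = S a) ∧
    (∀ a b : A, eLR K A a * eRL K A b = eRL K A b * eLR K A a) := by
  exact ⟨fun a => LinearMap.congr_fun (antipode_of hΔ hmono S hpre1 hanti) a,
    eLR_eRL_comm hΔ hmono S hpre1 hpre2 hanti⟩
end
end

section
/- Let A be a weak bialgebra with an antipode S such that the images ε_LR(A) and ε_RL(A) commute element-wise and S is anti-multiplicative. Then A is right-monoidal, i.e. a ε_LR(b) = ε_LR(a₍₁₎ b) a₍₂₎ for all a, b ∈ A. -/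
open TensorProduct

noncomputable section

variable (K A : Type*) [Field K] [Ring A] [Algebra K A] [Coalgebra K A]

lemma aux_conv_mul (S : A →ₗ[K] A) (hanti : ∀ a b : A, S (a * b) = S b * S a)
    (t u : A ⊗[K] A) :
    LinearMap.mul' K A (TensorProduct.map LinearMap.id S (t * u)) =
      LinearMap.mul' K A (TensorProduct.map (LinearMap.mulRight K
        (LinearMap.mul' K A (TensorProduct.map LinearMap.id S u))) S t) := by
  induction t with
  | zero => simp
  | add t t' h h' => rw [add_mul, map_add, map_add, h, h', map_add, map_add]
  | tmul x y =>
    induction u with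
    | zero => simp
    | add u u' h h' =>
      rw [mul_add, map_add, map_add, h, h']
      simp [mul_add, add_mul]
    | tmul z w => simp [hanti, mul_assoc]

lemma aux_counit (t : A ⊗[K] A) :
    LinearMap.mul' K A (TensorProduct.map LinearMap.id (eRL K A) t) =
      TensorProduct.rid K A (LinearMap.lTensor A (Coalgebra.counit (R := K) (A := A))
        (t * Coalgebra.comul (R := K) (1 : A))) := by
  induction t with
  | zero => simp
  | add t t' h h' => rw [add_mul, map_add, map_add, h, h', map_add, map_add]
  | tmul x y =>
    simp only [TensorProduct.map_tmul, LinearMap.mul'_apply, LinearMap.id_apply, eRL, inclR,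
      LinearMap.comp_apply, LinearEquiv.coe_coe, LinearMap.mulRight_apply,
      TensorProduct.mk_apply]
    generalize Coalgebra.comul (R := K) (1 : A) = u
    induction u with
    | zero => simp
    | add u u' h h' => simp only [mul_add, map_add, h, h']
    | tmul z w => simp

lemma aux_assoc (S : A →ₗ[K] A) (e : A) (t : (A ⊗[K] A) ⊗[K] A) :
    LinearMap.mul' K A (TensorProduct.map (LinearMap.mul' K A ∘ₗ
      TensorProduct.map (LinearMap.mulRight K e) S) LinearMap.id t) =
    LinearMap.mul' K A (TensorProduct.map (LinearMap.mulRight K e) (LinearMap.mul' K A ∘ₗ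
      TensorProduct.map S LinearMap.id) (TensorProduct.assoc K A A A t)) := by
  induction t with
  | zero => simp
  | add t t' h h' => simp only [map_add, h, h']
  | tmul p z =>
    induction p with
    | zero => simp
    | add t t' h h' => simp only [TensorProduct.add_tmul, map_add, h, h']
    | tmul x y => simp [mul_assoc]

lemma aux_comm (e : A) (f : A →ₗ[K] A) (h : ∀ y, e * f y = f y * e) (t : A ⊗[K] A) :
    LinearMap.mul' K A (TensorProduct.map (LinearMap.mulRight K e) f t) =
      LinearMap.mul' K A (TensorProduct.map LinearMap.id f t) * e := by
  induction t with
  | zero => simp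
  | add t t' h h' => simp only [map_add, h, h', add_mul]
  | tmul x y => simp [mul_assoc, h]

/-- if `S` is an anti-multiplicative antipode and `ε_LR(A)` commutes
with `ε_RL(A)`, then `A` is right-monoidal: `a ε_LR(b) = ε_LR(a₍₁₎ b) a₍₂₎`. -/
theorem stmt18 [FiniteDimensional K A] (hΔ : WeakBialg K A) (S : A →ₗ[K] A)
    (hpre1 : conv K A LinearMap.id S = eLR K A)
    (hpre2 : conv K A S LinearMap.id = eRL K A)
    (hant : conv K A (conv K A S LinearMap.id) S = S)
    (hcomm : ∀ a b : A, eLR K A a * eRL K A b = eRL K A b * eLR K A a)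
    (hanti : ∀ a b : A, S (a * b) = S b * S a) :
    ∀ a b : A, a * eLR K A b =
      conv K A (eLR K A ∘ₗ LinearMap.mulRight K b) LinearMap.id a := by
  intro a b
  have h1 : eLR K A ∘ₗ LinearMap.mulRight K b =
      (LinearMap.mul' K A ∘ₗ TensorProduct.map (LinearMap.mulRight K (eLR K A b)) S) ∘ₗ
        Coalgebra.comul (R := K) := by
    ext x
    have hx := aux_conv_mul K A S hanti (Coalgebra.comul (R := K) x) (Coalgebra.comul (R := K) b)
    rw [← hΔ] at hx
    rw [← hpre1]
    exact hx
  have h2 : ((LinearMap.mul' K A ∘ₗ TensorProduct.map S LinearMap.id) ∘ₗ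
      Coalgebra.comul (R := K)) = eRL K A := hpre2
  have h3 := aux_counit K A (Coalgebra.comul (R := K) a)
  rw [← hΔ, mul_one, Coalgebra.lTensor_counit_comul, TensorProduct.rid_tmul, one_smul] at h3
  have h4 := aux_comm K A (eLR K A b) (eRL K A) (hcomm b) (Coalgebra.comul (R := K) a)
  rw [h3, ← h2] at h4
  have h5 := aux_assoc K A S (eLR K A b)
    (LinearMap.rTensor A (Coalgebra.comul (R := K)) (Coalgebra.comul (R := K) a))
  rw [Coalgebra.coassoc_apply] at h5
  rw [← h4]
  unfold conv
  rw [h1]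
  simp only [LinearMap.comp_apply]
  rw [← LinearMap.comp_apply (TensorProduct.map _ _) (LinearMap.rTensor _ _),
    ← LinearMap.comp_apply (TensorProduct.map _ _) (LinearMap.lTensor _ _),
    LinearMap.map_comp_rTensor, LinearMap.map_comp_lTensor] at h5
  exact h5.symm
end
end
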